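/- For any (u,φ), (v,ψ) ∈ Ũ(H), one has d̃((u,φ), (v,ψ)) = m, i.e. the geodesic distance in the universal cover of U(H) equals the minimum over θ ∈ R of max_j |θ_j|. -/

import Mathlib

noncomputable section

abbrev Hsp (N : ℕ) : Type := EuclideanSpace ℂ (Fin N)

abbrev Op (N : ℕ) : Type := Hsp N →L[ℂ] Hsp N

/-- A map `γ : ℝ → E` is piecewise C¹ on `[a,b]` if there is a partition
`a = τ 0 ≤ τ 1 ≤ ⋯ ≤ τ n = b` such that `γ` is C¹ on each subinterval. -/
def PiecewiseC1On {E : Type*} [NormedAddCommGroup E] [NormedSpace ℝ E]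
    (γ : ℝ → E) (a b : ℝ) : Prop :=
  ∃ (n : ℕ) (τ : ℕ → ℝ), τ 0 = a ∧ τ n = b ∧ (∀ i < n, τ i ≤ τ (i + 1)) ∧
    ∀ i < n, ContDiffOn ℝ 1 γ (Set.Icc (τ i) (τ (i + 1)))

/-- The length `L(γ) = ∫_a^b ‖γ'(t)‖ dt` of a curve. -/
def pathLength {E : Type*} [NormedAddCommGroup E] [NormedSpace ℝ E]
    (γ : ℝ → E) (a b : ℝ) : ℝ :=
  ∫ t in a..b, ‖deriv γ t‖

/-- Geodesic distance on the unitary group of `EuclideanSpace ℂ (Fin N)`, for the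
Finsler metric given by the operator norm: the infimum of lengths of piecewise C¹
curves in the unitary group joining `u` to `v`. -/
def geoDist (N : ℕ) (u v : Op N) : ℝ :=
  sInf {l | ∃ (a b : ℝ) (γ : ℝ → Op N), a ≤ b ∧ PiecewiseC1On γ a b ∧
    (∀ t ∈ Set.Icc a b, γ t ∈ unitary (Op N)) ∧ γ a = u ∧ γ b = v ∧
    l = pathLength γ a b}

/-- `(u, φ)` belongs to the realization `Ũ(H) = {(u,φ) : det u = e^{iφ}}` of the
universal cover of the unitary group. -/
def InUCover (N : ℕ) (u : Op N) (φ : ℝ) : Prop :=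
  u ∈ unitary (Op N) ∧
    LinearMap.det (u : Hsp N →ₗ[ℂ] Hsp N) = Complex.exp (φ * Complex.I)

/-- Geodesic distance on the universal cover `Ũ(H)`: the infimum of the lengths
`∫ ‖γ'(t)‖ dt` over piecewise C¹ curves `t ↦ (γ t, f t)` in `Ũ(H)` joining
`(u, φ)` to `(v, ψ)`. -/
def ucoverDist (N : ℕ) (u : Op N) (φ : ℝ) (v : Op N) (ψ : ℝ) : ℝ :=
  sInf {l | ∃ (a b : ℝ) (γ : ℝ → Op N) (f : ℝ → ℝ), a ≤ b ∧
    PiecewiseC1On (fun t => (γ t, f t)) a b ∧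
    (∀ t ∈ Set.Icc a b, InUCover N (γ t) (f t)) ∧
    γ a = u ∧ f a = φ ∧ γ b = v ∧ f b = ψ ∧
    l = pathLength γ a b}

/-- The multiset of eigenvalues (with multiplicity) of an endomorphism, i.e. the
roots of its characteristic polynomial. -/
def eigenvalueMultiset (N : ℕ) (w : Op N) : Multiset ℂ :=
  (LinearMap.charpoly (w : Hsp N →ₗ[ℂ] Hsp N)).roots

/-- `θ ∈ R`: `(e^{iθ_j})_j` is the family of eigenvalues of `w` (with multiplicity)
and `∑ θ_j = c`. -/
def InRSet (N : ℕ) (w : Op N) (c : ℝ) (θ : Fin N → ℝ) : Prop :=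
  Multiset.map (fun j => Complex.exp ((θ j : ℂ) * Complex.I)) Finset.univ.val
      = eigenvalueMultiset N w ∧ ∑ j, θ j = c

/-- `m = min { max_j |θ_j| : θ ∈ R }`. -/
def mval (N : ℕ) (w : Op N) (c : ℝ) : ℝ :=
  sInf {x | ∃ θ : Fin N → ℝ, InRSet N w c θ ∧ x = ⨆ j, |θ j|}

end

noncomputable section
open Finset

lemma fejer_aux {R : Type*} [Ring R] [StarRing R] (y : R) (hy : star y * y = 1) (m : ℕ) :
    star (∑ k ∈ range m, y ^ k) * y ^ m = ∑ d ∈ range m, y ^ (d + 1) := by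
  induction m with
  | zero => simp
  | succ m ih =>
    have h1 : star (y ^ m) * y ^ m = 1 := by
      rw [star_pow]
      clear ih
      induction m with
      | zero => simp
      | succ m ih => rw [pow_succ (star y), pow_succ' y, mul_assoc, ← mul_assoc (star y) y, hy, one_mul, ih]
    rw [sum_range_succ, star_add, add_mul, pow_succ, ← mul_assoc, ih, ← mul_assoc, h1, one_mul,
      sum_range_succ', sum_mul]
    simp [pow_succ]

lemma fejer {R : Type*} [Ring R] [StarRing R] (y : R) (hy : star y * y = 1) (n : ℕ) :
    ∑ m ∈ range n, (1 + ∑ d ∈ range m, (y ^ (d + 1) + star y ^ (d + 1))) =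
      star (∑ k ∈ range n, y ^ k) * ∑ k ∈ range n, y ^ k := by
  induction n with
  | zero => simp
  | succ m ih =>
    have h1 : star (y ^ m) * y ^ m = 1 := by
      rw [star_pow]
      clear ih
      induction m with
      | zero => simp
      | succ m ih => rw [pow_succ (star y), pow_succ' y, mul_assoc, ← mul_assoc (star y) y, hy, one_mul, ih]
    have h2 := fejer_aux y hy m
    have h3 := congrArg star h2
    rw [star_mul, star_star] at h3
    rw [sum_range_succ, ih, sum_range_succ _ m, star_add, add_mul, mul_add, mul_add, h1, h2, h3,
      sum_add_distrib]
    have h4 : star (∑ d ∈ range m, y ^ (d + 1)) = ∑ d ∈ range m, star y ^ (d + 1) := by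
      simp only [star_sum, star_pow]
    rw [h4]
    abel

def gs (n : ℕ) (x : ℝ) : ℝ :=
  ∑ m ∈ range n, ∑ d ∈ range m, -(2 * Real.sin ((d + 1) * x) / (d + 1))

lemma gs_hasDeriv (n : ℕ) (x : ℝ) :
    HasDerivAt (gs n) (n - ‖∑ k ∈ range n, Complex.exp (x * Complex.I) ^ k‖ ^ 2) x := by
  have h : HasDerivAt (gs n)
      (∑ m ∈ range n, ∑ d ∈ range m, -(2 * Real.cos ((d + 1) * x))) x := by
    unfold gs
    refine HasDerivAt.fun_sum fun m _ => HasDerivAt.fun_sum fun d _ => ?_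
    have h0 : HasDerivAt (fun x : ℝ => ((d:ℝ) + 1) * x) ((d:ℝ)+1) x := by
      simpa using (hasDerivAt_id x).const_mul ((d:ℝ)+1)
    have := ((h0.sin.const_mul 2).div_const ((d:ℝ)+1)).fun_neg
    convert this using 1
    have : (d:ℝ) + 1 ≠ 0 := by positivity
    field_simp
  convert h using 1
  have hy : star (Complex.exp (x * Complex.I)) * Complex.exp (x * Complex.I) = 1 := by
    rw [Complex.star_def, ← Complex.normSq_eq_conj_mul_self, Complex.normSq_eq_norm_sq,
      Complex.norm_exp_ofReal_mul_I]; simp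
  have h2 := congrArg Complex.re (fejer _ hy n)
  rw [Complex.star_def, ← Complex.normSq_eq_conj_mul_self, Complex.ofReal_re,
    Complex.normSq_eq_norm_sq] at h2
  rw [← h2]
  have h3 : ∀ d : ℕ, (Complex.exp (x * Complex.I) ^ (d + 1)).re = Real.cos ((d+1)*x) := by
    intro d
    rw [← Complex.exp_nat_mul, ← mul_assoc]
    have := Complex.exp_ofReal_mul_I_re (((d+1:ℕ):ℝ) * x)
    push_cast at this ⊢
    exact this
  simp only [Complex.re_sum, Complex.add_re, ← map_pow, Complex.conj_re, h3,
    sum_add_distrib, sum_const, card_range, nsmul_eq_mul, mul_one, sum_neg_distrib]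
  simp only [← mul_sum, Complex.natCast_re]
  ring

lemma gs_neg_pi (n : ℕ) : gs n (-Real.pi) = 0 := by
  unfold gs
  refine sum_eq_zero fun m _ => sum_eq_zero fun d _ => ?_
  have : Real.sin (((d:ℝ)+1) * -Real.pi) = 0 := by
    rw [mul_neg, Real.sin_neg]
    have := Real.sin_nat_mul_pi (d+1)
    push_cast at this
    rw [this, neg_zero]
  rw [this]; simp

lemma gs_bound (x : ℝ) (h1 : -(2 * Real.pi) < x) (h2 : x < 0) :
    ∃ C, ∀ n, |gs n x - n * (x + Real.pi)| ≤ C := by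
  have hpi := Real.pi_pos
  have hne : ∀ s ∈ Set.uIcc (-Real.pi) x, Complex.exp (s * Complex.I) - 1 ≠ 0 := by
    intro s hs h
    have hs1 : -(2 * Real.pi) < s := lt_of_lt_of_le (lt_min (by linarith) h1) hs.1
    have hs2 : s < 0 := lt_of_le_of_lt hs.2 (max_lt (by linarith) h2)
    rw [sub_eq_zero, Complex.exp_eq_one_iff] at h
    obtain ⟨k, hk⟩ := h
    have hk' : (s:ℂ) = ((k * (2 * Real.pi) : ℝ) : ℂ) := by
      apply mul_right_cancel₀ Complex.I_ne_zero
      rw [hk]; push_cast; ring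
    have hk2 : s = k * (2 * Real.pi) := by exact_mod_cast hk'
    have h3 : (k:ℝ) < 0 := by nlinarith
    have h4 : (-1:ℝ) < k := by nlinarith
    have h5 : k < 0 := by exact_mod_cast h3
    have h6 : -1 < k := by exact_mod_cast h4
    omega
  obtain ⟨K, hK⟩ := (isCompact_uIcc (a := -Real.pi) (b := x)).exists_bound_of_continuousOn
    (f := fun s : ℝ => (4:ℝ) / ‖Complex.exp (s * Complex.I) - 1‖ ^ 2) (by
      apply ContinuousOn.div (by fun_prop) (by fun_prop)
      intro s hs
      have := hne s hs
      positivity)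
  refine ⟨K * ‖x - (-Real.pi)‖, fun n => ?_⟩
  have key := Convex.norm_image_sub_le_of_norm_hasDerivWithin_le
    (f := fun s => gs n s - n * s)
    (f' := fun s => (n - ‖∑ k ∈ range n, Complex.exp (s * Complex.I) ^ k‖ ^ 2) - n)
    (s := Set.uIcc (-Real.pi) x) (C := K) (x := -Real.pi) (y := x)
    (fun s hs => by
      have := (gs_hasDeriv n s).sub ((hasDerivAt_id s).const_mul (n:ℝ))
      simp only [mul_one] at this
      exact this.hasDerivWithinAt)
    (fun s hs => by
      have h := hK s hs
      refine le_trans ?_ h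
      have hp : 0 < ‖Complex.exp (s * Complex.I) - 1‖ := norm_pos_iff.mpr (hne s hs)
      rw [show ((n:ℝ) - ‖∑ k ∈ range n, Complex.exp (s * Complex.I) ^ k‖ ^ 2) - n =
        -‖∑ k ∈ range n, Complex.exp (s * Complex.I) ^ k‖ ^ 2 by ring, norm_neg,
        Real.norm_of_nonneg (by positivity), Real.norm_of_nonneg (by positivity),
        le_div_iff₀ (by positivity), ← mul_pow, ← norm_mul, geom_sum_mul]
      have : ‖Complex.exp (s * Complex.I) ^ n - 1‖ ≤ 2 := by
        refine (norm_sub_le _ _).trans ?_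
        rw [norm_pow, Complex.norm_exp_ofReal_mul_I]; norm_num
      nlinarith [norm_nonneg (Complex.exp (s * Complex.I) ^ n - 1)])
    (convex_uIcc _ _) Set.left_mem_uIcc Set.right_mem_uIcc
  rw [gs_neg_pi] at key
  rw [Real.norm_eq_abs] at key
  convert key using 2
  ring

lemma gs_zero (n : ℕ) : gs n 0 = 0 := by simp [gs]

/-- Choosing partial counts. -/
lemma exists_partial {N : ℕ} (n : Fin N → ℤ) (hn : ∀ j, 0 ≤ n j) (k : ℤ) (hk : 0 ≤ k)
    (hk2 : k ≤ ∑ j, n j) : ∃ l : Fin N → ℤ, (∀ j, 0 ≤ l j ∧ l j ≤ n j) ∧ ∑ j, l j = k := by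
  induction N generalizing k with
  | zero => exact ⟨n, by simp, by simp at hk2 ⊢; omega⟩
  | succ N ih =>
    rw [Fin.sum_univ_succ] at hk2
    have hs : 0 ≤ ∑ j : Fin N, n j.succ := sum_nonneg fun j _ => hn _
    have h0 := hn 0
    obtain ⟨l, hl, hl2⟩ := ih (fun j => n j.succ) (fun j => hn _) (k - min k (n 0)) (by omega)
      (by rcases min_cases k (n 0) with h | h <;> omega)
    refine ⟨Fin.cons (min k (n 0)) l, ?_, ?_⟩
    · intro j
      refine Fin.cases ?_ (fun j => ?_) j
      · simp; omega
      · simpa using hl j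
    · rw [Fin.sum_univ_succ]; simp [hl2]

/-- Choosing lifts with prescribed sum. -/
lemma exists_lift {N : ℕ} (m M : Fin N → ℝ) (δ c : ℝ) (hm : ∀ j, -δ ≤ m j)
    (hm2 : ∀ j, m j < -δ + 2 * Real.pi) (hM : ∀ j, M j ≤ δ) (hM2 : ∀ j, δ - 2 * Real.pi < M j)
    (n : Fin N → ℤ) (hn : ∀ j, M j = m j + n j * (2 * Real.pi))
    (k : ℤ) (hk : c = ∑ j, m j + k * (2 * Real.pi)) (h1 : ∑ j, m j ≤ c) (h2 : c ≤ ∑ j, M j) :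
    ∃ l : Fin N → ℤ, (∀ j, |m j + l j * (2 * Real.pi)| ≤ δ) ∧
      ∑ j, (m j + l j * (2 * Real.pi)) = c := by
  have hpi := Real.pi_pos
  have hk0 : 0 ≤ k := by
    have : (0:ℝ) ≤ k := by
      by_contra h; push Not at h; nlinarith
    exact_mod_cast this
  have hkn : k ≤ ∑ j, n j := by
    have h3 : ∑ j, M j = ∑ j, m j + (∑ j, (n j : ℝ)) * (2 * Real.pi) := by
      rw [sum_mul, ← sum_add_distrib]; exact sum_congr rfl fun j _ => hn j
    have : (k:ℝ) ≤ ∑ j, (n j:ℝ) := by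
      by_contra h; push Not at h; nlinarith
    exact_mod_cast this
  have hn0 : ∀ j, 0 ≤ n j := by
    by_cases hd : Real.pi ≤ δ
    · intro j
      have : (-1:ℝ) < n j := by
        have := hn j; have := hm2 j; have := hM2 j
        by_contra h; push Not at h; nlinarith
      have : -1 < n j := by exact_mod_cast this
      omega
    · have hle : ∀ j, n j ≤ 0 := by
        intro j
        have : (n j : ℝ) < 1 := by
          have := hn j; have := hm j; have := hM j
          by_contra h; push Not at h; nlinarith
        have : n j < 1 := by exact_mod_cast this
        omega
      intro j
      have h5 : ∑ j, n j ≤ n j := by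
        rw [← add_sum_erase univ n (mem_univ j)]
        have : ∑ x ∈ univ.erase j, n x ≤ 0 := sum_nonpos fun i _ => hle i
        omega
      omega
  obtain ⟨l, hl, hl2⟩ := exists_partial n hn0 k hk0 hkn
  refine ⟨l, fun j => ?_, ?_⟩
  · have h3 : (0:ℝ) ≤ l j := by exact_mod_cast (hl j).1
    have h4 : (l j:ℝ) ≤ n j := by exact_mod_cast (hl j).2
    have := hn j; have := hm j; have := hM j
    rw [abs_le]; constructor <;> nlinarith
  · rw [hk, sum_add_distrib, ← sum_mul, ← hl2]; push_cast; ring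

end
noncomputable section
open Finset

def trL (N : ℕ) : Op N →L[ℂ] ℂ :=
  LinearMap.toContinuousLinearMap
    ((LinearMap.trace ℂ (Hsp N)).comp (ContinuousLinearMap.coeLM ℂ))

lemma trL_apply {N : ℕ} (A : Op N) : trL N A = LinearMap.trace ℂ (Hsp N) (A : Hsp N →ₗ[ℂ] Hsp N) := rfl

lemma trL_mul_comm {N : ℕ} (A B : Op N) : trL N (A * B) = trL N (B * A) := by
  rw [trL_apply, trL_apply]
  exact LinearMap.trace_mul_comm ℂ (A : Hsp N →ₗ[ℂ] Hsp N) B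

lemma trL_eq_sum {N : ℕ} (A : Op N) (b : OrthonormalBasis (Fin N) ℂ (Hsp N)) :
    trL N A = ∑ i, inner ℂ (b i) (A (b i)) := by
  rw [trL_apply, LinearMap.trace_eq_sum_inner _ b]; rfl

lemma trL_one {N : ℕ} : trL N 1 = N := by
  rw [trL_eq_sum 1 (EuclideanSpace.basisFun (Fin N) ℂ)]
  simp

lemma trL_star {N : ℕ} (A : Op N) : trL N (star A) = star (trL N A) := by
  rw [trL_eq_sum _ (EuclideanSpace.basisFun (Fin N) ℂ), trL_eq_sum _ (EuclideanSpace.basisFun (Fin N) ℂ),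
    star_sum]
  refine sum_congr rfl fun i _ => ?_
  rw [ContinuousLinearMap.star_eq_adjoint, ContinuousLinearMap.adjoint_inner_right]
  exact (inner_conj_symm _ _).symm

lemma star_add_op {N : ℕ} (A B : Op N) : star (A + B) = star A + star B := star_add A B

lemma skew_op {N : ℕ} (B : Op N) (hB : star B = -B) (r : ℝ) :
    star (B + (-(r:ℂ) * Complex.I) • (1 : Op N)) = -(B + (-(r:ℂ) * Complex.I) • (1 : Op N)) := by
  have hs : star (-(r:ℂ) * Complex.I) = -(-(r:ℂ) * Complex.I) := by simp
  rw [star_add_op, star_smul, star_one, hB, hs]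
  ext x : 1
  simp
  abel

lemma trL_pos {N : ℕ} (D A : Op N) (hA : ∀ x, (inner ℂ x (A x)).im ≤ 0) :
    (trL N (star D * D * A)).im ≤ 0 := by
  rw [mul_assoc, trL_mul_comm, trL_eq_sum _ (EuclideanSpace.basisFun (Fin N) ℂ), Complex.im_sum]
  refine sum_nonpos fun i _ => ?_
  have := hA (star D (EuclideanSpace.basisFun (Fin N) ℂ i))
  rw [ContinuousLinearMap.star_eq_adjoint, ContinuousLinearMap.adjoint_inner_left] at this
  exact this

lemma pow_deriv {N : ℕ} (y : ℝ → Op N) (y' : Op N) (t : ℝ) (h : HasDerivAt y y' t) (k : ℕ) :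
    ∃ D, HasDerivAt (fun s => y s ^ (k + 1)) D t ∧
      ∀ j, trL N (y t ^ j * D) = (k + 1) * trL N (y t ^ (j + k) * y') := by
  induction k with
  | zero => exact ⟨y', by simpa using h, by simp⟩
  | succ k ih =>
    obtain ⟨D, hD, hj⟩ := ih
    refine ⟨D * y t + y t ^ (k+1) * y', ?_, fun j => ?_⟩
    · simp_rw [pow_succ _ (k+1)]
      exact hD.mul h
    · rw [mul_add, map_add, ← mul_assoc, trL_mul_comm, ← mul_assoc, ← pow_succ', hj, ← mul_assoc,
        ← pow_add]
      rw [show j + 1 + k = j + (k+1) by ring]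
      push_cast; ring

lemma matrix_det_deriv {n : ℕ} (M : ℝ → Matrix (Fin n) (Fin n) ℂ) (A : Matrix (Fin n) (Fin n) ℂ)
    (t : ℝ) (h : ∀ i j, HasDerivAt (fun s => M s i j) (A i j) t) (h1 : M t = 1) :
    HasDerivAt (fun s => (M s).det) A.trace t := by
  simp_rw [Matrix.det_apply']
  have := HasDerivAt.fun_sum (u := (univ : Finset (Equiv.Perm (Fin n)))) (x := t)
    (A := fun σ s => ((Equiv.Perm.sign σ : ℤ) : ℂ) * ∏ i, M s (σ i) i)
    (A' := fun σ => ((Equiv.Perm.sign σ : ℤ) : ℂ) *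
      ∑ i, (∏ j ∈ univ.erase i, M t (σ j) j) • A (σ i) i)
    (fun σ _ => (HasDerivAt.fun_finsetProd fun i _ => h (σ i) i).const_mul _)
  refine this.congr_deriv ?_
  rw [sum_eq_single 1]
  · simp [Matrix.trace, h1]
  · intro σ _ hσ
    rw [sum_eq_zero, mul_zero]
    intro i _
    obtain ⟨j0, hj0⟩ : ∃ j, σ j ≠ j := by
      by_contra hh; push Not at hh; exact hσ (Equiv.ext hh)
    have : ∃ j ∈ univ.erase i, σ j ≠ j := by
      by_cases hi : j0 = i
      · refine ⟨σ j0, by simp [← hi, hj0], fun hh => hj0 (σ.injective hh)⟩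
      · exact ⟨j0, by simp [hi], hj0⟩
    obtain ⟨j, hj, hj2⟩ := this
    rw [prod_eq_zero hj, zero_smul]
    rw [h1, Matrix.one_apply_ne hj2]
  · simp

lemma det_deriv {N : ℕ} (w : ℝ → Op N) (w' : Op N) (t : ℝ) (h : HasDerivAt w w' t)
    (hu : w t ∈ unitary (Op N)) :
    HasDerivAt (fun s => LinearMap.det (w s : Hsp N →ₗ[ℂ] Hsp N))
      (LinearMap.det (w t : Hsp N →ₗ[ℂ] Hsp N) * trL N (star (w t) * w')) t := by
  set b := (EuclideanSpace.basisFun (Fin N) ℂ).toBasis with hb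
  have h1 : HasDerivAt (fun s => star (w t) * w s) (star (w t) * w') t := h.const_mul (star (w t))
  have h2 := matrix_det_deriv
    (fun s => LinearMap.toMatrix b b ((star (w t) * w s : Op N) : Hsp N →ₗ[ℂ] Hsp N))
    (LinearMap.toMatrix b b ((star (w t) * w' : Op N) : Hsp N →ₗ[ℂ] Hsp N)) t
    (fun i j => by
      let e : Op N →ₗ[ℂ] ℂ :=
        { toFun := fun A => LinearMap.toMatrix b b (A : Hsp N →ₗ[ℂ] Hsp N) i j
          map_add' := fun A B => by simp [LinearMap.toMatrix_apply]
          map_smul' := fun c A => by simp [LinearMap.toMatrix_apply] }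
      exact ((LinearMap.toContinuousLinearMap e).restrictScalars ℝ).hasFDerivAt.comp_hasDerivAt t h1)
    (by
      simp only [Unitary.star_mul_self_of_mem hu]
      exact LinearMap.toMatrix_one b)
  rw [← LinearMap.trace_eq_matrix_trace] at h2
  have h3 := h2.const_mul (LinearMap.det (w t : Hsp N →ₗ[ℂ] Hsp N))
  refine HasDerivAt.congr_of_eventuallyEq h3 (Filter.Eventually.of_forall fun s => ?_)
  show LinearMap.det (w s : Hsp N →ₗ[ℂ] Hsp N) = LinearMap.det (w t : Hsp N →ₗ[ℂ] Hsp N) *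
    (LinearMap.toMatrix b b ((star (w t) * w s : Op N) : Hsp N →ₗ[ℂ] Hsp N)).det
  rw [LinearMap.det_toMatrix, ← LinearMap.det_comp]
  congr 1
  have : w t * (star (w t) * w s) = w s := by
    rw [← mul_assoc, Unitary.mul_star_self_of_mem hu, one_mul]
  conv_lhs => rw [← this]
  rfl

def Gn {N : ℕ} (n : ℕ) (y : Op N) : ℝ :=
  ∑ m ∈ range n, ∑ d ∈ range m, -(2 * (trL N (y ^ (d + 1))).im / (d + 1))

lemma Gn_deriv {N : ℕ} (n : ℕ) (y : ℝ → Op N) (y' : Op N) (t : ℝ) (h : HasDerivAt y y' t)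
    (hu : y t ∈ unitary (Op N)) (hA : star (star (y t) * y') = - (star (y t) * y')) :
    HasDerivAt (fun s => Gn n (y s)) (n * (trL N (star (y t) * y')).im -
      (trL N (star (∑ k ∈ range n, y t ^ k) * (∑ k ∈ range n, y t ^ k) * (star (y t) * y'))).im) t := by
  set A := star (y t) * y' with hAdef
  have hy' : y' = y t * A := by
    rw [hAdef, ← mul_assoc, Unitary.mul_star_self_of_mem hu, one_mul]
  have h1 : HasDerivAt (fun s => Gn n (y s))
      (∑ m ∈ range n, ∑ d ∈ range m, -(2 * (trL N (y t ^ (d+1) * A)).im)) t := by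
    unfold Gn
    refine HasDerivAt.fun_sum fun m _ => HasDerivAt.fun_sum fun d _ => ?_
    obtain ⟨D, hD, hj⟩ := pow_deriv y y' t h d
    have h2 : HasDerivAt (fun s => (trL N (y s ^ (d+1))).im) (trL N D).im t :=
      (Complex.imCLM.comp ((trL N).restrictScalars ℝ)).hasFDerivAt.comp_hasDerivAt t hD
    have := ((h2.const_mul 2).div_const ((d:ℝ)+1)).fun_neg
    convert this using 1
    have hj0 := hj 0
    rw [pow_zero, one_mul, zero_add, hy', ← mul_assoc, ← pow_succ] at hj0
    rw [hj0]
    have : (((d:ℂ) + 1) * trL N (y t ^ (d+1) * A)).im = ((d:ℝ)+1) * (trL N (y t ^ (d+1) * A)).im := by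
      have := Complex.im_ofReal_mul ((d:ℝ)+1) (trL N (y t ^ (d+1) * A))
      push_cast at this
      exact this
    rw [this]
    have : (d:ℝ) + 1 ≠ 0 := by positivity
    field_simp
  convert h1 using 1
  rw [← fejer (y t) (Unitary.star_mul_self_of_mem hu) n, sum_mul, map_sum, Complex.im_sum]
  have h3 : ∀ k, (trL N (star (y t) ^ k * A)).im = (trL N (y t ^ k * A)).im := by
    intro k
    have : star (y t ^ k * A) = - (A * star (y t) ^ k) := by
      rw [star_mul, star_pow, hA]
      exact neg_mul A _
    have h4 := trL_star (y t ^ k * A)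
    rw [this, map_neg, trL_mul_comm] at h4
    have := congrArg Complex.im h4
    rw [Complex.neg_im, Complex.star_def, Complex.conj_im] at this
    linarith
  simp only [add_mul, one_mul, map_add, Complex.add_im, sum_mul, map_sum, Complex.im_sum,
    h3, sum_add_distrib, sum_const, card_range, nsmul_eq_mul, sum_neg_distrib, ← mul_sum]
  ring

lemma core_piece {N : ℕ} (n : ℕ) (w : ℝ → Op N) (f L : ℝ → ℝ) (w' : ℝ → Op N) (f' : ℝ → ℝ)
    (p q : ℝ) (hpq : p ≤ q)
    (hw : ContinuousOn w (Set.Icc p q)) (hf : ContinuousOn f (Set.Icc p q))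
    (hL : ContinuousOn L (Set.Icc p q))
    (hw' : ∀ t ∈ Set.Ioo p q, HasDerivAt w (w' t) t)
    (hf' : ∀ t ∈ Set.Ioo p q, HasDerivAt f (f' t) t)
    (hL' : ∀ t ∈ Set.Ioo p q, HasDerivAt L ‖w' t‖ t)
    (hu : ∀ t ∈ Set.Icc p q, InUCover N (w t) (f t)) :
    Gn n (Complex.exp (-(L p : ℂ) * Complex.I) • w p) - n * (f p - N * L p) ≤
    Gn n (Complex.exp (-(L q : ℂ) * Complex.I) • w q) - n * (f q - N * L q) := by
  have hmono : MonotoneOn (fun t => Gn n (Complex.exp (-(L t : ℂ) * Complex.I) • w t)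
      - n * (f t - N * L t)) (Set.Icc p q) := by
    have hder : ∀ t ∈ Set.Ioo p q, ∃ d, 0 ≤ d ∧
        HasDerivAt (fun t => Gn n (Complex.exp (-(L t : ℂ) * Complex.I) • w t)
          - n * (f t - N * L t)) d t := by
      intro t ht
      obtain ⟨hut, hdt⟩ := hu t (Set.Ioo_subset_Icc_self ht)
      have hwt := hw' t ht
      have hft := hf' t ht
      have hLt := hL' t ht
      set c : ℂ := Complex.exp (-(L t : ℂ) * Complex.I) with hc
      have hcc : star c * c = 1 := by
        rw [Complex.star_def, ← Complex.normSq_eq_conj_mul_self, Complex.normSq_eq_norm_sq, hc,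
          ← Complex.ofReal_neg, Complex.norm_exp_ofReal_mul_I]; simp
      have hcd : HasDerivAt (fun s => Complex.exp (-(L s : ℂ) * Complex.I))
          (c * (-(‖w' t‖:ℂ) * Complex.I)) t :=
        ((hLt.ofReal_comp.neg).mul_const Complex.I).cexp
      have hyd := hcd.smul hwt
      set B := star (w t) * w' t with hB
      have hsu := Unitary.star_mul_self_of_mem hut
      have hyu : c • w t ∈ unitary (Op N) := by
        rw [Unitary.mem_iff, star_smul, smul_mul_smul_comm, smul_mul_smul_comm, hcc, mul_comm c, hcc,
          hsu, Unitary.mul_star_self_of_mem hut]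
        simp
      have hAeq : star (c • w t) * (c • w' t + (c * (-(‖w' t‖:ℂ) * Complex.I)) • w t)
          = B + (-(‖w' t‖:ℂ) * Complex.I) • 1 := by
        rw [mul_add, star_smul, smul_mul_smul_comm, smul_mul_smul_comm, ← mul_assoc, hcc, hsu]
        simp [hB]
      -- B is skew
      have hBs : star B = - B := by
        have h1 : HasDerivWithinAt (fun s => star (w s) * w s) (star (w' t) * w t + star (w t) * w' t)
            (Set.Ioo p q) t := (hwt.star.mul hwt).hasDerivWithinAt
        have h2 : HasDerivWithinAt (fun s => star (w s) * w s) 0 (Set.Ioo p q) t := by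
          refine (hasDerivWithinAt_const t _ (1 : Op N)).congr (fun s hs => ?_) hsu
          exact Unitary.star_mul_self_of_mem (hu s (Set.Ioo_subset_Icc_self hs)).1
        have h3 := (isOpen_Ioo.uniqueDiffWithinAt ht).eq_deriv _ h1 h2
        rw [hB, star_mul, star_star]
        exact eq_neg_of_add_eq_zero_left h3
      have hdet : f' t = (trL N B).im := by
        have h1 := (det_deriv w (w' t) t hwt hut).hasDerivWithinAt (s := Set.Ioo p q)
        have h2 : HasDerivWithinAt (fun s => LinearMap.det (w s : Hsp N →ₗ[ℂ] Hsp N))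
            (Complex.exp (f t * Complex.I) * ((f' t : ℂ) * Complex.I)) (Set.Ioo p q) t := by
          refine HasDerivWithinAt.congr
            ((hft.ofReal_comp.mul_const Complex.I).cexp.hasDerivWithinAt) (fun s hs => ?_) hdt
          exact (hu s (Set.Ioo_subset_Icc_self hs)).2
        have h3 := (isOpen_Ioo.uniqueDiffWithinAt ht).eq_deriv _ h1 h2
        rw [hdt] at h3
        have h4 := mul_left_cancel₀ (Complex.exp_ne_zero _) h3
        rw [hB, h4]; simp
      have hG := Gn_deriv n (fun s => Complex.exp (-(L s : ℂ) * Complex.I) • w s) _ t hyd hyu (by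
        simp only [← hc]
        rw [hAeq]
        exact skew_op B hBs _)
      simp only [← hc] at hG
      rw [hAeq] at hG
      have hfull := hG.sub ((hft.sub (hLt.const_mul (N:ℝ))).const_mul (n:ℝ))
      refine ⟨_, ?_, hfull⟩
      have h5 : (trL N (B + (-(‖w' t‖:ℂ) * Complex.I) • 1)).im = f' t - N * ‖w' t‖ := by
        rw [map_add, map_smul, trL_one, Complex.add_im, hdet]
        simp
        ring
      rw [h5]
      have h6 := trL_pos (∑ k ∈ range n, (c • w t) ^ k) (B + (-(‖w' t‖:ℂ) * Complex.I) • 1) (by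
        intro x
        rw [add_apply, inner_add_right, Complex.add_im,
          smul_apply, inner_smul_right, one_apply_eq_self,
          inner_self_eq_norm_sq_to_K]
        have h7 : (inner ℂ x (B x)).im ≤ ‖w' t‖ * ‖x‖ ^ 2 := by
          refine (Complex.im_le_norm _).trans ((norm_inner_le_norm _ _).trans ?_)
          have h8 : ‖B x‖ ≤ ‖w' t‖ * ‖x‖ := by
            refine (B.le_opNorm x).trans ?_
            gcongr
            rw [hB, CStarRing.norm_mem_unitary_mul _ (Unitary.star_mem hut)]
          nlinarith [norm_nonneg x]
        have h9 : (-(‖w' t‖:ℂ) * Complex.I * ((‖x‖ : ℂ)) ^ 2).im = - (‖w' t‖ * ‖x‖^2) := by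
          rw [← Complex.ofReal_pow, ← Complex.ofReal_neg, mul_right_comm, ← Complex.ofReal_mul,
            Complex.im_ofReal_mul, Complex.I_im]; ring
        have h10 : (-(‖w' t‖:ℂ) * Complex.I * (((‖x‖:ℝ) : ℂ)) ^ 2).im = - (‖w' t‖ * ‖x‖^2) := h9
        calc _ = (inner ℂ x (B x)).im + (-(‖w' t‖:ℂ) * Complex.I * (((‖x‖:ℝ) : ℂ)) ^ 2).im := rfl
          _ ≤ 0 := by rw [h10]; linarith)
      linarith
    choose! d hd hd2 using hder
    refine monotoneOn_of_hasDerivWithinAt_nonneg (convex_Icc p q) ?_ (f' := d) ?_ ?_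
    · have hc1 : ContinuousOn (fun t => Complex.exp (-(L t : ℂ) * Complex.I) • w t) (Set.Icc p q) := by
        fun_prop
      have hc2 : Continuous (fun y : Op N => Gn n y) := by
        unfold Gn; fun_prop
      exact (hc2.comp_continuousOn hc1).sub (by fun_prop)
    · intro t ht
      rw [interior_Icc] at ht ⊢
      exact (hd2 t ht).hasDerivWithinAt
    · intro t ht
      rw [interior_Icc] at ht
      exact hd t ht
  exact hmono (Set.left_mem_Icc.mpr hpq) (Set.right_mem_Icc.mpr hpq) hpq

end
noncomputable section
open Finset

lemma diag_exists {N : ℕ} (w : Op N) (hw : w ∈ unitary (Op N)) :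
    ∃ (b : OrthonormalBasis (Fin N) ℂ (Hsp N)) (μ : Fin N → ℂ),
      (∀ i, ‖μ i‖ = 1) ∧ ∀ i, w (b i) = μ i • b i := by
  classical
  have hin : ∀ x y, inner ℂ (w x) (w y) = inner ℂ x y := by
    intro x y
    have h := Unitary.star_mul_self_of_mem hw
    rw [← ContinuousLinearMap.adjoint_inner_right, ← ContinuousLinearMap.star_eq_adjoint]
    have h2 : star w (w y) = (star w * w) y := rfl
    rw [h2, h]; rfl
  have hnorm : ∀ x, ‖w x‖ = ‖x‖ := by
    intro x
    rw [← sq_eq_sq₀ (norm_nonneg _) (norm_nonneg _)]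
    have := hin x x
    rw [inner_self_eq_norm_sq_to_K, inner_self_eq_norm_sq_to_K] at this
    exact_mod_cast this
  have hmu : ∀ (μ : ℂ) (x : Hsp N), x ≠ 0 → w x = μ • x → ‖μ‖ = 1 := by
    intro μ x hx h
    have h1 := hnorm x
    rw [h, norm_smul] at h1
    have : 0 < ‖x‖ := norm_pos_iff.mpr hx
    exact mul_right_cancel₀ this.ne' (by rw [h1, one_mul])
  set T : Module.End ℂ (Hsp N) := (w : Hsp N →ₗ[ℂ] Hsp N) with hT
  have hTw : ∀ x, T x = w x := fun x => rfl
  have hfam : OrthogonalFamily ℂ (fun μ : ℂ => Module.End.eigenspace T μ)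
      fun μ => (Module.End.eigenspace T μ).subtypeₗᵢ := by
    rintro μ ν hμν ⟨x, hx⟩ ⟨y, hy⟩
    show inner ℂ x y = 0
    by_cases hx0 : x = 0
    · simp [hx0]
    rw [Module.End.mem_eigenspace_iff, hTw] at hx hy
    have h1 := hin x y
    rw [hx, hy, inner_smul_left, inner_smul_right, ← mul_assoc] at h1
    by_contra h0
    have h2 : (starRingEnd ℂ) μ * ν = 1 := mul_right_cancel₀ h0 (by rw [h1, one_mul])
    have h3 : (starRingEnd ℂ) μ * μ = 1 := by
      rw [← Complex.normSq_eq_conj_mul_self, Complex.normSq_eq_norm_sq, hmu μ x hx0 hx]; simp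
    have h4 : (starRingEnd ℂ) μ ≠ 0 := left_ne_zero_of_mul_eq_one h3
    exact hμν (mul_left_cancel₀ h4 (h3.trans h2.symm))
  have hfam' : OrthogonalFamily ℂ (fun μ : Module.End.Eigenvalues T => Module.End.eigenspace T μ)
      fun μ => (Module.End.eigenspace T μ).subtypeₗᵢ := hfam.comp Subtype.coe_injective
  have hinv : ∀ x ∈ (⨆ μ, Module.End.eigenspace T μ)ᗮ, T x ∈ (⨆ μ, Module.End.eigenspace T μ)ᗮ := by
    intro x hx
    rw [← Submodule.iInf_orthogonal, Submodule.mem_iInf] at hx ⊢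
    intro μ y hy
    by_cases hy0 : y = 0
    · simp [hy0]
    have hyx := hx μ y hy
    rw [Module.End.mem_eigenspace_iff, hTw] at hy
    have h5 := hmu μ y hy0 hy
    have h6 : μ ≠ 0 := by intro h; rw [h] at h5; simp at h5
    have h7 := hin y x
    rw [hy, inner_smul_left, hyx] at h7
    exact (mul_eq_zero.mp h7).resolve_left ((map_ne_zero _).mpr h6)
  have htop : (⨆ μ, Module.End.eigenspace T μ)ᗮ = ⊥ := by
    by_contra hne
    set p := (⨆ μ, Module.End.eigenspace T μ)ᗮ with hp
    have : Nontrivial p := Submodule.nontrivial_iff_ne_bot.mpr hne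
    obtain ⟨ν, hν⟩ := Module.End.exists_eigenvalue (T.restrict hinv)
    apply hν
    refine Module.End.eigenspace_restrict_eq_bot hinv ?_
    have H₂ : Module.End.eigenspace T ν ⟂ p :=
      (Submodule.isOrtho_orthogonal_right _).mono_left (le_iSup _ _)
    exact H₂.disjoint
  have htop' : (⨆ μ : Module.End.Eigenvalues T, Module.End.eigenspace T μ)ᗮ = ⊥ := by
    rw [← htop]
    congr 1
    exact iSup_ne_bot_subtype _
  have hint : DirectSum.IsInternal (fun μ : Module.End.Eigenvalues T => Module.End.eigenspace T μ) :=
    hfam'.isInternal_iff.mpr htop'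
  have hn : Module.finrank ℂ (Hsp N) = N := by simp
  refine ⟨hint.subordinateOrthonormalBasis hn hfam',
    fun i => ((hint.subordinateOrthonormalBasisIndex hn i hfam' : Module.End.Eigenvalues T) : ℂ), ?_, ?_⟩
  · intro i
    have h := hint.subordinateOrthonormalBasis_subordinate hn i hfam'
    rw [Module.End.mem_eigenspace_iff, hTw] at h
    exact hmu _ _ ((hint.subordinateOrthonormalBasis hn hfam').orthonormal.ne_zero i) h
  · intro i
    have h := hint.subordinateOrthonormalBasis_subordinate hn i hfam'
    rw [Module.End.mem_eigenspace_iff, hTw] at h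
    exact h

section
variable {N : ℕ} (b : OrthonormalBasis (Fin N) ℂ (Hsp N)) (μ : Fin N → ℂ) (w : Op N)

lemma diag_toMatrix (h : ∀ i, w (b i) = μ i • b i) :
    LinearMap.toMatrix b.toBasis b.toBasis (w : Hsp N →ₗ[ℂ] Hsp N) = Matrix.diagonal μ := by
  ext i j
  rw [LinearMap.toMatrix_apply]
  have : (w : Hsp N →ₗ[ℂ] Hsp N) (b.toBasis j) = μ j • b.toBasis j := by simpa using h j
  rw [this]
  simp [Matrix.diagonal_apply, eq_comm]
  split_ifs with hij
  · rw [hij]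
  · rfl

lemma diag_eigenvalues (h : ∀ i, w (b i) = μ i • b i) :
    eigenvalueMultiset N w = Multiset.map μ univ.val := by
  unfold eigenvalueMultiset
  rw [← LinearMap.charpoly_toMatrix _ b.toBasis, diag_toMatrix b μ w h, Matrix.charpoly_diagonal]
  have := Polynomial.roots_multiset_prod_X_sub_C (Multiset.map μ univ.val)
  rw [Multiset.map_map] at this
  exact this

lemma diag_det (h : ∀ i, w (b i) = μ i • b i) :
    LinearMap.det (w : Hsp N →ₗ[ℂ] Hsp N) = ∏ i, μ i := by
  rw [← LinearMap.det_toMatrix b.toBasis, diag_toMatrix b μ w h, Matrix.det_diagonal]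

lemma diag_pow (h : ∀ i, w (b i) = μ i • b i) (k : ℕ) (i : Fin N) :
    (w ^ k) (b i) = μ i ^ k • b i := by
  induction k with
  | zero => simp
  | succ k ih =>
    rw [pow_succ w]
    show (w ^ k) (w (b i)) = _
    rw [h, map_smul, ih, smul_smul, pow_succ, mul_comm]

lemma diag_trL_pow (h : ∀ i, w (b i) = μ i • b i) (k : ℕ) : trL N (w ^ k) = ∑ i, μ i ^ k := by
  rw [trL_eq_sum _ b]
  refine sum_congr rfl fun i _ => ?_
  rw [diag_pow b μ w h, inner_smul_right, inner_self_eq_norm_sq_to_K]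
  simp

lemma diag_Gn (h : ∀ i, w (b i) = μ i • b i) (x : Fin N → ℝ)
    (hx : ∀ i, μ i = Complex.exp (x i * Complex.I)) (n : ℕ) : Gn n w = ∑ i, gs n (x i) := by
  unfold Gn gs
  rw [sum_comm]
  refine sum_congr rfl fun m _ => ?_
  rw [sum_comm]
  refine sum_congr rfl fun d _ => ?_
  rw [diag_trL_pow b μ w h, Complex.im_sum, sum_neg_distrib, ← sum_div, ← mul_sum]
  congr 4
  funext i
  rw [hx, ← Complex.exp_nat_mul, ← mul_assoc]
  have := Complex.exp_ofReal_mul_I_im (((d+1:ℕ):ℝ) * x i)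
  push_cast at this ⊢
  exact this

lemma diag_star (hw : w ∈ unitary (Op N)) (hμ : ∀ i, ‖μ i‖ = 1) (h : ∀ i, w (b i) = μ i • b i) (i : Fin N) :
    (star w) (b i) = star (μ i) • b i := by
  have h1 : star w (w (b i)) = b i := by
    have h2 : star w (w (b i)) = (star w * w) (b i) := rfl
    rw [h2, Unitary.star_mul_self_of_mem hw]; rfl
  rw [h, map_smul] at h1
  have h3 : star (μ i) * μ i = 1 := by
    rw [Complex.star_def, ← Complex.normSq_eq_conj_mul_self, Complex.normSq_eq_norm_sq, hμ]; simp
  conv_rhs => rw [← h1, smul_smul, h3, one_smul]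

def diagOp : Op N := ∑ i, μ i • (innerSL ℂ (b i)).smulRight (b i)

lemma diagOp_apply (x : Hsp N) : diagOp b μ x = ∑ i, (μ i * inner ℂ (b i) x) • b i := by
  simp [diagOp, smul_smul]

lemma diagOp_basis (i : Fin N) : diagOp b μ (b i) = μ i • b i := by
  rw [diagOp_apply, sum_eq_single i]
  · simp [inner_self_eq_norm_sq_to_K]
  · intro j _ hj
    rw [b.orthonormal.2 hj]; simp
  · simp

lemma op_ext (A B : Op N) (h : ∀ i, A (b i) = B (b i)) : A = B := by
  have : (A : Hsp N →ₗ[ℂ] Hsp N) = B := b.toBasis.ext fun i => by simpa using h i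
  exact ContinuousLinearMap.coe_injective this

lemma diagOp_inner (x : Hsp N) (i : Fin N) :
    inner ℂ (b i) (diagOp b μ x) = μ i * inner ℂ (b i) x := by
  rw [diagOp_apply]
  exact b.orthonormal.inner_right_fintype (fun i => μ i * inner ℂ (b i) x) i

lemma diagOp_norm (C : ℝ) (hC : 0 ≤ C) (h : ∀ i, ‖μ i‖ ≤ C) : ‖diagOp b μ‖ ≤ C := by
  refine ContinuousLinearMap.opNorm_le_bound _ hC fun x => ?_
  rw [← sq_le_sq₀ (norm_nonneg _) (by positivity), mul_pow, ← b.sum_sq_norm_inner_right,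
    ← b.sum_sq_norm_inner_right x, mul_sum]
  refine sum_le_sum fun i _ => ?_
  rw [diagOp_inner, norm_mul, mul_pow]
  gcongr
  exact h i

lemma diagOp_mul (ν : Fin N → ℂ) : diagOp b μ * diagOp b ν = diagOp b (fun i => μ i * ν i) := by
  refine op_ext b _ _ fun i => ?_
  show diagOp b μ (diagOp b ν (b i)) = _
  rw [diagOp_basis, map_smul, diagOp_basis, diagOp_basis, smul_smul, mul_comm]

lemma diagOp_one : diagOp b (fun _ => 1) = 1 := by
  refine op_ext b _ _ fun i => ?_
  rw [diagOp_basis]; simp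

lemma diagOp_star : star (diagOp b μ) = diagOp b (fun i => star (μ i)) := by
  rw [ContinuousLinearMap.star_eq_adjoint]
  symm
  rw [ContinuousLinearMap.eq_adjoint_iff]
  intro x y
  rw [diagOp_apply, diagOp_apply, sum_inner, inner_sum]
  refine sum_congr rfl fun i _ => ?_
  rw [inner_smul_left, inner_smul_right]
  have : (starRingEnd ℂ) (inner ℂ (b i) x) = inner ℂ x (b i) := inner_conj_symm _ _
  rw [map_mul, this]
  simp
  ring

lemma diagOp_unitary (hμ : ∀ i, ‖μ i‖ = 1) : diagOp b μ ∈ unitary (Op N) := by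
  have h3 : ∀ i, star (μ i) * μ i = 1 := by
    intro i
    rw [Complex.star_def, ← Complex.normSq_eq_conj_mul_self, Complex.normSq_eq_norm_sq, hμ]; simp
  rw [Unitary.mem_iff, diagOp_star, diagOp_mul, diagOp_mul]
  simp only [h3, mul_comm (μ _), diagOp_one]
  simp

lemma diagOp_hasDeriv (a : ℝ → Fin N → ℂ) (a' : Fin N → ℂ) (t : ℝ)
    (h : ∀ i, HasDerivAt (fun s => a s i) (a' i) t) :
    HasDerivAt (fun s => diagOp b (a s)) (diagOp b a') t := by
  unfold diagOp
  exact HasDerivAt.fun_sum fun i _ => (h i).smul_const ((innerSL ℂ (b i)).smulRight (b i) : Op N)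

end

lemma exists_perm {N : ℕ} (f g : Fin N → ℂ)
    (h : Multiset.map f univ.val = Multiset.map g univ.val) : ∃ σ : Fin N ≃ Fin N, ∀ i, g (σ i) = f i := by
  classical
  have hc : ∀ c, Nonempty ({a // f a = c} ≃ {a // g a = c}) := by
    intro c
    have h1 := congrArg (Multiset.count c) h
    rw [Multiset.count_map, Multiset.count_map] at h1
    refine ⟨Fintype.equivOfCardEq ?_⟩
    rw [Fintype.card_subtype, Fintype.card_subtype]
    simp only [Finset.card_def, Finset.filter_val]
    simpa only [eq_comm] using h1
  exact ⟨Equiv.ofFiberEquiv fun c => (hc c).some,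
    fun i => Equiv.ofFiberEquiv_map (fun c => (hc c).some) i⟩

end
noncomputable section
open Finset

lemma incover_mul {N : ℕ} {A B : Op N} {a c : ℝ} (hA : InUCover N A a) (hB : InUCover N B c) :
    InUCover N (A * B) (a + c) := by
  refine ⟨mul_mem hA.1 hB.1, ?_⟩
  have h : ((A * B : Op N) : Hsp N →ₗ[ℂ] Hsp N) = (A : Hsp N →ₗ[ℂ] Hsp N) ∘ₗ B := rfl
  rw [h, LinearMap.det_comp, hA.2, hB.2, ← Complex.exp_add]
  push_cast; ring_nf

lemma incover_star {N : ℕ} {A : Op N} {a : ℝ} (hA : InUCover N A a) :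
    InUCover N (star A) (-a) := by
  refine ⟨Unitary.star_mem hA.1, ?_⟩
  have h : ((star A * A : Op N) : Hsp N →ₗ[ℂ] Hsp N) =
    ((star A : Op N) : Hsp N →ₗ[ℂ] Hsp N) ∘ₗ A := rfl
  have h2 := congrArg LinearMap.det h
  rw [LinearMap.det_comp, Unitary.star_mul_self_of_mem hA.1, hA.2] at h2
  have h3 : LinearMap.det ((1 : Op N) : Hsp N →ₗ[ℂ] Hsp N) = 1 := LinearMap.det_id
  rw [h3] at h2
  have h4 : Complex.exp (((-a : ℝ) : ℂ) * Complex.I) * Complex.exp (a * Complex.I) = 1 := by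
    rw [← Complex.exp_add]; push_cast; ring_nf; simp
  exact mul_right_cancel₀ (Complex.exp_ne_zero _) (h2.symm.trans h4.symm)

lemma core_path {N : ℕ} (a b : ℝ) (γ : ℝ → Op N) (f : ℝ → ℝ)
    (h : PiecewiseC1On (fun t => (γ t, f t)) a b)
    (S : Op N →L[ℝ] Op N) (hS : ∀ x, ‖S x‖ = ‖x‖) (σ φ ε : ℝ)
    (hu : ∀ t ∈ Set.Icc a b, InUCover N (S (γ t)) (σ * (f t - φ))) (n : ℕ) :
    Gn n (Complex.exp (-(ε : ℂ) * Complex.I) • S (γ a)) - n * (σ * (f a - φ) - N * ε) ≤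
    Gn n (Complex.exp (-((ε + pathLength γ a b : ℝ) : ℂ) * Complex.I) • S (γ b))
      - n * (σ * (f b - φ) - N * (ε + pathLength γ a b)) := by
  obtain ⟨k, τ, hτ0, hτk, hτm, hτd⟩ := h
  have hmono : ∀ i j, i ≤ j → j ≤ k → τ i ≤ τ j := by
    intro i j hij
    induction j, hij using Nat.le_induction with
    | base => intro _; exact le_rfl
    | succ j hij ih => intro hj; exact (ih (by omega)).trans (hτm j (by omega))
  -- facts on each piece
  have hγd : ∀ i < k, ContDiffOn ℝ 1 γ (Set.Icc (τ i) (τ (i+1))) := fun i hi => (hτd i hi).fst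
  have hfd : ∀ i < k, ContDiffOn ℝ 1 f (Set.Icc (τ i) (τ (i+1))) := fun i hi => (hτd i hi).snd
  have hder : ∀ i < k, ∀ t ∈ Set.Ioo (τ i) (τ (i+1)), HasDerivAt γ (deriv γ t) t := by
    intro i hi t ht
    exact (((hγd i hi).contDiffAt (Icc_mem_nhds ht.1 ht.2)).differentiableAt one_ne_zero).hasDerivAt
  have hderf : ∀ i < k, ∀ t ∈ Set.Ioo (τ i) (τ (i+1)), HasDerivAt f (deriv f t) t := by
    intro i hi t ht
    exact (((hfd i hi).contDiffAt (Icc_mem_nhds ht.1 ht.2)).differentiableAt one_ne_zero).hasDerivAt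
  have hcont : ∀ i < k, ContinuousOn (fun t => ‖deriv γ t‖) (Set.Ioo (τ i) (τ (i+1))) := by
    intro i hi
    exact (((hγd i hi).mono Set.Ioo_subset_Icc_self).continuousOn_deriv_of_isOpen isOpen_Ioo
      le_rfl).norm
  have hint : ∀ i < k, IntervalIntegrable (fun t => ‖deriv γ t‖) MeasureTheory.volume (τ i) (τ (i+1)) := by
    intro i hi
    rcases (hτm i hi).eq_or_lt with he | hlt
    · rw [he]
    · have h1 : ContinuousOn (fun t => ‖derivWithin γ (Set.Icc (τ i) (τ (i+1))) t‖)
          (Set.Icc (τ i) (τ (i+1))) :=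
        ((hγd i hi).continuousOn_derivWithin (uniqueDiffOn_Icc hlt) le_rfl).norm
      rw [intervalIntegrable_iff_integrableOn_Ioo_of_le hlt.le]
      refine ((h1.integrableOn_Icc).mono_set Set.Ioo_subset_Icc_self).congr_fun ?_ measurableSet_Ioo
      intro t ht
      simp only
      rw [derivWithin_of_mem_nhds (Icc_mem_nhds ht.1 ht.2)]
  have hintab : IntervalIntegrable (fun t => ‖deriv γ t‖) MeasureTheory.volume a b := by
    rw [← hτ0, ← hτk]
    exact IntervalIntegrable.trans_iterate hint
  have hab : a ≤ b := by rw [← hτ0, ← hτk]; exact hmono 0 k (by omega) le_rfl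
  have hsub : ∀ i < k, Set.Icc (τ i) (τ (i+1)) ⊆ Set.Icc a b := by
    intro i hi
    rw [← hτ0, ← hτk]
    exact Set.Icc_subset_Icc (hmono 0 i (by omega) (by omega)) (hmono (i+1) k (by omega) le_rfl)
  set L : ℝ → ℝ := fun t => ε + ∫ s in a..t, ‖deriv γ s‖ with hL
  have hLc : ContinuousOn L (Set.Icc a b) := by
    have h2 := intervalIntegral.continuousOn_primitive_interval' hintab Set.left_mem_uIcc
    rw [Set.uIcc_of_le hab] at h2
    exact continuousOn_const.add h2
  have hLd : ∀ i < k, ∀ t ∈ Set.Ioo (τ i) (τ (i+1)), HasDerivAt L ‖deriv γ t‖ t := by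
    intro i hi t ht
    have htab := hsub i hi (Set.Ioo_subset_Icc_self ht)
    refine HasDerivAt.const_add ε (intervalIntegral.integral_hasDerivAt_right ?_ ?_ ?_)
    · refine hintab.mono_set ?_
      rw [Set.uIcc_of_le htab.1, Set.uIcc_of_le hab]
      exact Set.Icc_subset_Icc_right htab.2
    · exact (hcont i hi).stronglyMeasurableAtFilter isOpen_Ioo t ht
    · exact (hcont i hi).continuousAt (Ioo_mem_nhds ht.1 ht.2)
  have hstep : ∀ i ≤ k,
      Gn n (Complex.exp (-(L (τ 0) : ℂ) * Complex.I) • S (γ (τ 0)))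
        - n * (σ * (f (τ 0) - φ) - N * L (τ 0)) ≤
      Gn n (Complex.exp (-(L (τ i) : ℂ) * Complex.I) • S (γ (τ i)))
        - n * (σ * (f (τ i) - φ) - N * L (τ i)) := by
    intro i
    induction i with
    | zero => intro _; exact le_rfl
    | succ i ih =>
      intro hi
      refine (ih (by omega)).trans ?_
      have hi' : i < k := by omega
      refine core_piece n (fun t => S (γ t)) (fun t => σ * (f t - φ)) L
        (fun t => S (deriv γ t)) (fun t => σ * deriv f t) (τ i) (τ (i+1)) (hτm i hi')
        (S.continuous.comp_continuousOn (hγd i hi').continuousOn) ?_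
        (hLc.mono (hsub i hi')) ?_ ?_ ?_ ?_
      · have := (hfd i hi').continuousOn
        fun_prop
      · intro t ht
        exact S.hasFDerivAt.comp_hasDerivAt t (hder i hi' t ht)
      · intro t ht
        exact ((hderf i hi' t ht).sub_const φ).const_mul σ
      · intro t ht
        simp only [hS]
        exact hLd i hi' t ht
      · intro t ht
        exact hu t (hsub i hi' ht)
  have hfin := hstep k le_rfl
  rw [hτ0, hτk] at hfin
  have hLa : L a = ε := by simp [hL]
  have hLb : L b = ε + pathLength γ a b := rfl
  rw [hLa, hLb] at hfin
  exact hfin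

lemma limit_bound {N : ℕ} (x : Fin N → ℝ) (hx1 : ∀ j, -(2 * Real.pi) < x j) (hx2 : ∀ j, x j ≤ 0)
    (ε δ c : ℝ) (hε : 0 < ε) (hε2 : ε < 2 * Real.pi)
    (h : ∀ n : ℕ, N * gs n (-ε) + n * (N * ε) ≤ ∑ j, gs n (x j) - n * (c - N * δ)) :
    c ≤ ∑ j, (δ + x j) := by
  have hpi := Real.pi_pos
  have hb : ∀ j, ∃ C, ∀ n : ℕ, gs n (x j) ≤ n * (x j + Real.pi) + C := by
    intro j
    rcases (hx2 j).eq_or_lt with h0 | h0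
    · refine ⟨0, fun n => ?_⟩
      rw [h0, gs_zero]; positivity
    · obtain ⟨C, hC⟩ := gs_bound (x j) (hx1 j) h0
      exact ⟨C, fun n => by have := (abs_le.mp (hC n)).2; linarith⟩
  choose C hC using hb
  obtain ⟨C0, hC0⟩ := gs_bound (-ε) (by linarith) (by linarith)
  by_contra hlt
  push Not at hlt
  rw [sum_add_distrib, sum_const, card_univ, Fintype.card_fin, nsmul_eq_mul] at hlt
  obtain ⟨n, hn⟩ := exists_nat_gt ((N * C0 + ∑ j, C j) / (c - (N * δ + ∑ j, x j)))
  rw [div_lt_iff₀ (by linarith)] at hn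
  have h1 := h n
  have h2 : ∑ j, gs n (x j) ≤ n * (∑ j, x j) + n * (N * Real.pi) + ∑ j, C j := by
    calc ∑ j, gs n (x j) ≤ ∑ j, (n * (x j + Real.pi) + C j) := sum_le_sum fun j _ => hC j n
      _ = _ := by
        rw [sum_add_distrib, ← mul_sum, sum_add_distrib, sum_const, card_univ, Fintype.card_fin,
          nsmul_eq_mul]; ring
  have h3 : (N:ℝ) * (n * (-ε + Real.pi) - C0) ≤ N * gs n (-ε) := by
    gcongr
    have := (abs_le.mp (hC0 n)).1
    linarith
  nlinarith

lemma exists_top_lift (δ : ℝ) (z : ℂ) (hz : ‖z‖ = 1) :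
    ∃ M : ℝ, δ - 2 * Real.pi < M ∧ M ≤ δ ∧ Complex.exp (M * Complex.I) = z := by
  have hp := Real.two_pi_pos
  have h := toIocMod_mem_Ioc hp (δ - 2 * Real.pi) (Complex.arg z)
  refine ⟨toIocMod hp (δ - 2 * Real.pi) (Complex.arg z), h.1, by linarith [h.2], ?_⟩
  have h1 : Complex.exp (Complex.arg z * Complex.I) = z := by
    have := Complex.norm_mul_exp_arg_mul_I z
    rwa [hz, Complex.ofReal_one, one_mul] at this
  conv_rhs => rw [← h1]
  rw [Complex.exp_eq_exp_iff_exists_int]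
  refine ⟨-toIocDiv hp (δ - 2 * Real.pi) (Complex.arg z), ?_⟩
  rw [toIocMod]
  simp only [zsmul_eq_mul]
  push_cast
  ring

lemma one_side {N : ℕ} (a b : ℝ) (γ : ℝ → Op N) (f : ℝ → ℝ)
    (h : PiecewiseC1On (fun t => (γ t, f t)) a b)
    (S : Op N →L[ℝ] Op N) (hS : ∀ x, ‖S x‖ = ‖x‖) (σ ε : ℝ) (hε : 0 < ε) (hε2 : ε < 2 * Real.pi)
    (hu : ∀ t ∈ Set.Icc a b, InUCover N (S (γ t)) (σ * (f t - f a)))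
    (hSa : S (γ a) = 1) (e : OrthonormalBasis (Fin N) ℂ (Hsp N)) (μ : Fin N → ℂ)
    (hμ : ∀ i, ‖μ i‖ = 1) (he : ∀ i, S (γ b) (e i) = μ i • e i) :
    ∃ M : Fin N → ℝ, (∀ j, ε + pathLength γ a b - 2 * Real.pi < M j) ∧
      (∀ j, M j ≤ ε + pathLength γ a b) ∧ (∀ j, Complex.exp (M j * Complex.I) = μ j) ∧
      σ * (f b - f a) ≤ ∑ j, M j := by
  set δ := ε + pathLength γ a b with hδ
  choose M hM1 hM2 hM3 using fun j => exists_top_lift δ (μ j) (hμ j)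
  refine ⟨M, hM1, hM2, hM3, ?_⟩
  have := limit_bound (fun j => M j - δ) (fun j => by linarith [hM1 j]) (fun j => by linarith [hM2 j])
    ε δ (σ * (f b - f a)) hε hε2 (fun n => by
      have h1 := core_path a b γ f h S hS σ (f a) ε hu n
      rw [hSa, ← hδ] at h1
      rw [diag_Gn e (fun _ => Complex.exp (-(ε:ℂ) * Complex.I)) _ (by intro i; simp) (fun _ => -ε)
        (by intro i; push_cast; rfl) n,
        diag_Gn e (fun j => Complex.exp (-(δ:ℂ) * Complex.I) * μ j) _
          (by intro i; rw [smul_apply, he, smul_smul]) (fun j => M j - δ)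
        (by intro i; rw [← hM3 i, ← Complex.exp_add]; push_cast; ring_nf) n] at h1
      simp only [sum_const, card_univ, Fintype.card_fin, nsmul_eq_mul, sub_self, mul_zero] at h1
      linarith)
  simpa using this

lemma lower {N : ℕ} (a b : ℝ) (γ : ℝ → Op N) (f : ℝ → ℝ) (hab : a ≤ b)
    (h : PiecewiseC1On (fun t => (γ t, f t)) a b)
    (hu : ∀ t ∈ Set.Icc a b, InUCover N (γ t) (f t)) (ε : ℝ) (hε : 0 < ε) (hε2 : ε < 2 * Real.pi) :
    ∃ θ : Fin N → ℝ, InRSet N (γ b * star (γ a)) (f b - f a) θ ∧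
      ∀ j, |θ j| ≤ ε + pathLength γ a b := by
  have hua := hu a (Set.left_mem_Icc.mpr hab)
  have hub := hu b (Set.right_mem_Icc.mpr hab)
  have hsa := Unitary.star_mem hua.1
  let S1 : Op N →L[ℝ] Op N := (ContinuousLinearMap.mul ℝ (Op N)).flip (star (γ a))
  have hS1 : ∀ x, S1 x = x * star (γ a) := fun x => rfl
  let S2 : Op N →L[ℝ] Op N := ((starL' ℝ : Op N ≃L[ℝ] Op N) : Op N →L[ℝ] Op N).comp S1
  have hS2 : ∀ x, S2 x = star (x * star (γ a)) := fun x => rfl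
  have hn1 : ∀ x, ‖S1 x‖ = ‖x‖ := fun x => by
    rw [hS1, CStarRing.norm_mul_mem_unitary _ hsa]
  have hn2 : ∀ x, ‖S2 x‖ = ‖x‖ := fun x => by
    rw [hS2, ContinuousLinearMap.star_eq_adjoint, LinearIsometryEquiv.norm_map,
      CStarRing.norm_mul_mem_unitary _ hsa]
  set w := γ b * star (γ a) with hw
  have hcov : ∀ t ∈ Set.Icc a b, InUCover N (γ t * star (γ a)) (f t - f a) := fun t ht => by
    rw [sub_eq_add_neg]; exact incover_mul (hu t ht) (incover_star hua)
  have hcw := hcov b (Set.right_mem_Icc.mpr hab)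
  obtain ⟨e, μ, hμ, he⟩ := diag_exists w hcw.1
  have h11 : γ a * star (γ a) = 1 := Unitary.mul_star_self_of_mem hua.1
  obtain ⟨M, hM1, hM2, hM3, hM4⟩ := one_side a b γ f h S1 hn1 1 ε hε hε2
    (fun t ht => by rw [hS1, one_mul]; exact hcov t ht) (by rw [hS1, h11]) e μ hμ
    (fun i => he i)
  obtain ⟨m, hm1, hm2, hm3, hm4⟩ := one_side a b γ f h S2 hn2 (-1) ε hε hε2
    (fun t ht => by rw [hS2, neg_one_mul]; exact incover_star (hcov t ht))
    (by rw [hS2, h11, star_one]) e (fun i => star (μ i)) (by intro i; rw [norm_star]; exact hμ i)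
    (fun i => diag_star e μ w hcw.1 hμ he i)
  have hm3' : ∀ j, Complex.exp (((-m j : ℝ) : ℂ) * Complex.I) = μ j := by
    intro j
    have h5 := congrArg star (hm3 j)
    rw [star_star, Complex.star_def, ← Complex.exp_conj] at h5
    rw [← h5]
    congr 1
    simp
  have hex : ∀ x y : ℝ, Complex.exp (x * Complex.I) = Complex.exp (y * Complex.I) →
      ∃ k : ℤ, x = y + k * (2 * Real.pi) := by
    intro x y hxy
    rw [Complex.exp_eq_exp_iff_exists_int] at hxy
    obtain ⟨k, hk⟩ := hxy
    refine ⟨k, ?_⟩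
    have : (x : ℂ) = ((y + k * (2 * Real.pi) : ℝ) : ℂ) := by
      apply mul_right_cancel₀ Complex.I_ne_zero
      rw [hk]; push_cast; ring
    exact_mod_cast this
  choose nn hnn using fun j => hex (M j) (-m j) ((hM3 j).trans (hm3' j).symm)
  obtain ⟨k, hk⟩ := hex (f b - f a) (∑ j, -m j) (by
    rw [← hcw.2, diag_det e μ w he]
    rw [Complex.ofReal_sum, sum_mul, Complex.exp_sum]
    exact prod_congr rfl fun j _ => (hm3' j).symm)
  obtain ⟨l, hl1, hl2⟩ := exists_lift (fun j => -m j) M (ε + pathLength γ a b) (f b - f a)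
    (fun j => by linarith [hm2 j]) (fun j => by linarith [hm1 j]) hM2 hM1 nn hnn k hk
    (by rw [sum_neg_distrib]; linarith) (by linarith)
  refine ⟨fun j => -m j + l j * (2 * Real.pi), ⟨?_, hl2⟩, hl1⟩
  rw [diag_eigenvalues e μ w he]
  congr 1
  funext j
  rw [← hm3' j, Complex.exp_eq_exp_iff_exists_int]
  refine ⟨l j, ?_⟩
  push_cast; ring

lemma rset_nonempty {N : ℕ} (hN : 1 ≤ N) (w : Op N) (c : ℝ) (hw : InUCover N w c) :
    ∃ θ, InRSet N w c θ := by
  obtain ⟨e, μ, hμ, he⟩ := diag_exists w hw.1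
  choose M _ _ hM3 using fun j => exists_top_lift 0 (μ j) (hμ j)
  have hd := diag_det e μ w he
  rw [hw.2] at hd
  have h2 : Complex.exp (c * Complex.I) = Complex.exp ((∑ j, M j : ℝ) * Complex.I) := by
    rw [hd, Complex.ofReal_sum, sum_mul, Complex.exp_sum]
    exact prod_congr rfl fun j _ => (hM3 j).symm
  rw [Complex.exp_eq_exp_iff_exists_int] at h2
  obtain ⟨k, hk⟩ := h2
  have hk2 : c = ∑ j, M j + k * (2 * Real.pi) := by
    have : (c : ℂ) = ((∑ j, M j + k * (2 * Real.pi) : ℝ) : ℂ) := by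
      apply mul_right_cancel₀ Complex.I_ne_zero
      rw [hk]; push_cast; ring
    exact_mod_cast this
  let j0 : Fin N := ⟨0, hN⟩
  refine ⟨fun j => M j + (if j = j0 then (k:ℝ) * (2 * Real.pi) else 0), ?_, ?_⟩
  · rw [diag_eigenvalues e μ w he]
    congr 1
    funext j
    rw [← hM3 j]
    beta_reduce
    split_ifs
    · rw [Complex.exp_eq_exp_iff_exists_int]
      exact ⟨k, by push_cast; ring⟩
    · simp
  · rw [sum_add_distrib, hk2]; simp

lemma upper {N : ℕ} (hN : 1 ≤ N) (u v : Op N) (φ ψ : ℝ) (hu : InUCover N u φ)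
    (hv : InUCover N v ψ) (θ : Fin N → ℝ) (hθ : InRSet N (v * star u) (ψ - φ) θ) :
    ∃ (a b : ℝ) (γ : ℝ → Op N) (f : ℝ → ℝ), (a ≤ b ∧
    PiecewiseC1On (fun t => (γ t, f t)) a b ∧
    (∀ t ∈ Set.Icc a b, InUCover N (γ t) (f t)) ∧
    γ a = u ∧ f a = φ ∧ γ b = v ∧ f b = ψ) ∧ pathLength γ a b ≤ ⨆ j, |θ j| := by
  have hw : InUCover N (v * star u) (ψ - φ) := by
    rw [sub_eq_add_neg]; exact incover_mul hv (incover_star hu)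
  obtain ⟨e0, μ, hμ, he0⟩ := diag_exists _ hw.1
  have h1 := hθ.1
  rw [diag_eigenvalues e0 μ _ he0] at h1
  obtain ⟨p, hp⟩ := exists_perm _ _ h1
  let e : OrthonormalBasis (Fin N) ℂ (Hsp N) := e0.reindex p.symm
  have he : ∀ i, (v * star u) (e i) = Complex.exp (θ i * Complex.I) • e i := by
    intro i
    have : e i = e0 (p i) := by simp [e]
    rw [this, he0, hp]
  let E : ℝ → Op N := fun t => diagOp e (fun i => Complex.exp (((t * θ i : ℝ) : ℂ) * Complex.I))
  have hEcov : ∀ t, InUCover N (E t) (t * (ψ - φ)) := by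
    intro t
    refine ⟨diagOp_unitary _ _ fun i => Complex.norm_exp_ofReal_mul_I _, ?_⟩
    rw [diag_det e _ _ (fun i => diagOp_basis e _ i), ← Complex.exp_sum, ← sum_mul, ← hθ.2, mul_sum]
    push_cast; rfl
  have hE0 : E 0 = 1 := by
    simp [E, diagOp_one]
  have hE1 : E 1 = v * star u := by
    refine op_ext e _ _ fun i => ?_
    rw [he i]
    simp only [E]
    rw [diagOp_basis, one_mul]
  have hEd : ∀ t, HasDerivAt E
      (diagOp e (fun i => Complex.exp (((t * θ i : ℝ) : ℂ) * Complex.I) * ((θ i : ℂ) * Complex.I))) t := by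
    intro t
    refine diagOp_hasDeriv e _ _ t fun i => ?_
    have h2 : HasDerivAt (fun s : ℝ => s * θ i) (θ i) t := by
      simpa using (hasDerivAt_id t).mul_const (θ i)
    exact (h2.ofReal_comp.mul_const Complex.I).cexp
  have hgd : ∀ t, HasDerivAt (fun s => E s * u)
      (diagOp e (fun i => Complex.exp (((t * θ i : ℝ) : ℂ) * Complex.I) * ((θ i : ℂ) * Complex.I)) * u) t :=
    fun t => (hEd t).mul_const u
  have hsmooth : ContDiff ℝ 1 (fun s => E s * u) := by
    have : ContDiff ℝ 1 E := by
      simp only [E]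
      unfold diagOp
      refine ContDiff.sum fun i _ => ContDiff.smul_const ?_ _
      have h3 : ContDiff ℝ 1 (fun t : ℝ => ((t * θ i : ℝ) : ℂ)) :=
        Complex.ofRealCLM.contDiff.comp (contDiff_id.mul contDiff_const)
      exact (h3.mul contDiff_const).cexp
    exact this.mul contDiff_const
  have hbdd : BddAbove (Set.range fun j => |θ j|) := Set.finite_range _ |>.bddAbove
  have hsup : ∀ j, |θ j| ≤ ⨆ j, |θ j| := fun j => le_ciSup hbdd j
  have hsup0 : 0 ≤ ⨆ j, |θ j| := (abs_nonneg _).trans (hsup ⟨0, hN⟩)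
  refine ⟨0, 1, fun s => E s * u, fun s => s * (ψ - φ) + φ, ⟨zero_le_one, ?_, ?_, ?_, ?_, ?_, ?_⟩, ?_⟩
  · refine ⟨1, fun i => i, by simp, by simp, by simp, fun i hi => ?_⟩
    exact (hsmooth.prodMk (by fun_prop)).contDiffOn
  · intro t _
    exact incover_mul (hEcov t) hu
  · simp [hE0]
  · simp
  · simp only [hE1]
    rw [mul_assoc, Unitary.star_mul_self_of_mem hu.1, mul_one]
  · ring
  · unfold pathLength
    have h5 := intervalIntegral.norm_integral_le_of_norm_le_const (a := 0) (b := 1)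
      (f := fun t => ‖deriv (fun s => E s * u) t‖) (C := ⨆ j, |θ j|) (fun t _ => by
        rw [norm_norm, (hgd t).deriv, CStarRing.norm_mul_mem_unitary _ hu.1]
        refine diagOp_norm e _ _ hsup0 fun i => ?_
        rw [norm_mul, Complex.norm_exp_ofReal_mul_I, one_mul, norm_mul, Complex.norm_I, mul_one,
          Complex.norm_real]
        exact hsup i)
    refine (le_abs_self _).trans ?_
    simpa using h5

end
/-- for any `(u,φ), (v,ψ) ∈ Ũ(H)`, `d̃((u,φ),(v,ψ)) = m`, the
minimum over `θ ∈ R` of `max_j |θ_j|`. -/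
theorem ucoverDist_eq_mval (N : ℕ) (hN : 1 ≤ N) (u v : unitary (Op N))
    (φ ψ : ℝ) (hu : InUCover N ↑u φ) (hv : InUCover N ↑v ψ) :
    ucoverDist N ↑u φ ↑v ψ = mval N ↑(v * u⁻¹) (ψ - φ) := by
  have hw : ((v * u⁻¹ : unitary (Op N)) : Op N) = (v : Op N) * star (u : Op N) := rfl
  rw [hw]
  haveI : Nonempty (Fin N) := ⟨⟨0, hN⟩⟩
  have hcov : InUCover N ((v : Op N) * star (u : Op N)) (ψ - φ) := by
    rw [sub_eq_add_neg]; exact incover_mul hv (incover_star hu)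
  obtain ⟨θ0, hθ0⟩ := rset_nonempty hN _ _ hcov
  apply le_antisymm
  · unfold mval
    refine le_csInf ⟨_, θ0, hθ0, rfl⟩ ?_
    rintro x ⟨θ, hθ, rfl⟩
    obtain ⟨a, b, γ, f, ⟨h1, h2, h3, h4, h5, h6, h7⟩, hle⟩ := upper hN _ _ φ ψ hu hv θ hθ
    refine le_trans (csInf_le ⟨0, ?_⟩ ⟨a, b, γ, f, h1, h2, h3, h4, h5, h6, h7, rfl⟩) hle
    rintro y ⟨a, b, γ, f, hab, -, -, -, -, -, -, rfl⟩
    exact intervalIntegral.integral_nonneg hab fun t _ => norm_nonneg _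
  · unfold ucoverDist
    refine le_csInf ?_ ?_
    · obtain ⟨a, b, γ, f, ⟨h1, h2, h3, h4, h5, h6, h7⟩, -⟩ := upper hN _ _ φ ψ hu hv θ0 hθ0
      exact ⟨_, a, b, γ, f, h1, h2, h3, h4, h5, h6, h7, rfl⟩
    · rintro y ⟨a, b, γ, f, hab, hp, hc, h4, h5, h6, h7, rfl⟩
      refine le_of_forall_pos_le_add fun ε hε => ?_
      have hpi := Real.pi_pos
      obtain ⟨θ, hθ, hb⟩ := lower a b γ f hab hp hc (min ε Real.pi) (lt_min hε hpi)
        ((min_le_right _ _).trans_lt (by linarith))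
      rw [h4, h5, h6, h7] at hθ
      refine le_trans (csInf_le ⟨0, ?_⟩ ⟨θ, hθ, rfl⟩) ?_
      · rintro z ⟨θ', -, rfl⟩
        exact Real.iSup_nonneg fun j => abs_nonneg _
      · refine ciSup_le fun j => (hb j).trans ?_
        linarith [min_le_left ε Real.pi]
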